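/- arXiv:2306.08410 — 3 statements merged into one kernel-verified Lean document; each statement's English description precedes it below -/
import Mathlib

section
/- For all integers l ≥ 0 and n ≥ l, the characters of finite Fibonacci-l configurations satisfy the recurrence χ^l_{n+1}(z,q) = χ^l_n(z,q) + z·q^n·χ^l_{n-l}(z,q) in the polynomial ring ℤ[z,q]. -/
/-- The set of finite Fibonacci-`l` configurations on `n` points: functions
`a : {0,…,n-1} → {0,1}` (encoded as `Fin n → Bool`) such that `a i + a j ≤ 1`
whenever `1 ≤ |i - j| ≤ l`. -/
def fibSet (l n : ℕ) : Finset (Fin n → Bool) :=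
  Finset.univ.filter fun a =>
    ∀ i j : Fin n, (i : ℕ) < (j : ℕ) → (j : ℕ) ≤ (i : ℕ) + l →
      ¬(a i = true ∧ a j = true)

/-- The character `χ^l_n(z,q) = Σ_{a ∈ Fib^l_n} z^{a_0+⋯+a_{n-1}} q^{0·a_0+⋯+(n-1)·a_{n-1}}`
as an element of `ℤ[z,q]`, where `z = X 0` and `q = X 1`. -/
noncomputable def fibChar (l n : ℕ) : MvPolynomial (Fin 2) ℤ :=
  ∑ a ∈ fibSet l n,
    MvPolynomial.X 0 ^ (Finset.univ.filter fun i => a i = true).card *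
      MvPolynomial.X 1 ^ (∑ i ∈ Finset.univ.filter (fun i => a i = true), (i : ℕ))

/-- The Fibonacci condition on a finite set of naturals. -/
def FibGap (l : ℕ) (S : Finset ℕ) : Prop :=
  ∀ i ∈ S, ∀ j ∈ S, i < j → i + l < j

/-- The monomial of a finite set of naturals. -/
noncomputable def fibMon (S : Finset ℕ) : MvPolynomial (Fin 2) ℤ :=
  MvPolynomial.X 0 ^ S.card * MvPolynomial.X 1 ^ (∑ i ∈ S, i)

open Classical in
theorem fibChar_eq (l n : ℕ) :
    fibChar l n = ∑ S ∈ (Finset.range n).powerset.filter (FibGap l), fibMon S := by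
  unfold fibChar
  refine Finset.sum_bij'
    (fun a _ => (Finset.univ.filter fun i => a i = true).map Fin.valEmbedding)
    (fun S _ => fun i : Fin n => decide ((i : ℕ) ∈ S)) ?_ ?_ ?_ ?_ ?_
  · intro a ha
    simp only [fibSet, Finset.mem_filter, Finset.mem_univ, true_and] at ha
    simp only [Finset.mem_filter, Finset.mem_powerset]
    constructor
    · intro x hx
      simp only [Finset.mem_map, Finset.mem_filter] at hx
      obtain ⟨y, _, rfl⟩ := hx
      simp
    · intro i hi j hj hij
      simp only [Finset.mem_map, Finset.mem_filter, Finset.mem_univ, true_and] at hi hj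
      obtain ⟨x, hx, rfl⟩ := hi
      obtain ⟨y, hy, rfl⟩ := hj
      by_contra hc
      exact ha x y hij (not_lt.mp hc) ⟨hx, hy⟩
  · intro S hS
    simp only [Finset.mem_filter, Finset.mem_powerset] at hS
    simp only [fibSet, Finset.mem_filter, Finset.mem_univ, true_and, decide_eq_true_eq]
    rintro i j hij hjl ⟨hi, hj⟩
    have := hS.2 i hi j hj hij
    omega
  · intro a ha
    funext i
    rw [Bool.eq_iff_iff]
    simp [Fin.val_inj]
  · intro S hS
    simp only [Finset.mem_filter, Finset.mem_powerset] at hS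
    ext x
    simp only [Finset.mem_map, Finset.mem_filter, Finset.mem_univ, true_and, decide_eq_true_eq]
    constructor
    · rintro ⟨y, hy, rfl⟩
      exact hy
    · intro hx
      exact ⟨⟨x, Finset.mem_range.mp (hS.1 hx)⟩, hx, rfl⟩
  · intro a ha
    simp [fibMon]

/-- For `l ≥ 0` and `n ≥ l`, the recurrence
`χ^l_{n+1}(z,q) = χ^l_n(z,q) + z·q^n·χ^l_{n-l}(z,q)` holds in `ℤ[z,q]`. -/
theorem fibChar_recurrence (l n : ℕ) (h : l ≤ n) :
    fibChar l (n + 1) =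
      fibChar l n + MvPolynomial.X 0 * MvPolynomial.X 1 ^ n * fibChar l (n - l) := by
  classical
  rw [fibChar_eq, fibChar_eq, fibChar_eq, Finset.sum_filter, Finset.range_add_one,
    Finset.sum_powerset_insert Finset.notMem_range_self, ← Finset.sum_filter, ← Finset.sum_filter]
  congr 1
  have hset : (Finset.range n).powerset.filter (fun t => FibGap l (insert n t)) =
      (Finset.range (n - l)).powerset.filter (FibGap l) := by
    ext t
    simp only [Finset.mem_filter, Finset.mem_powerset]
    constructor
    · rintro ⟨ht, hg⟩
      refine ⟨fun x hx => ?_, fun i hi j hj => hg i (by simp [hi]) j (by simp [hj])⟩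
      have hxn := Finset.mem_range.mp (ht hx)
      have := hg x (by simp [hx]) n (by simp) hxn
      rw [Finset.mem_range]
      omega
    · rintro ⟨ht, hg⟩
      have hlt : ∀ x ∈ t, x + l < n := fun x hx => by
        have := Finset.mem_range.mp (ht hx)
        omega
      refine ⟨fun x hx => ?_, fun i hi j hj hij => ?_⟩
      · have := hlt x hx
        rw [Finset.mem_range]
        omega
      · rcases Finset.mem_insert.mp hi with hi2 | hi2 <;>
          rcases Finset.mem_insert.mp hj with hj2 | hj2
        · omega
        · have := hlt j hj2
          omega
        · rw [hj2]
          exact hlt i hi2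
        · exact hg i hi2 j hj2 hij
  rw [hset, Finset.mul_sum]
  refine Finset.sum_congr rfl fun t ht => ?_
  have hn : n ∉ t := fun hx => by
    have := Finset.mem_range.mp (Finset.mem_powerset.mp (Finset.mem_filter.mp ht).1 hx)
    omega
  rw [fibMon, fibMon, Finset.card_insert_of_notMem hn, Finset.sum_insert hn]
  ring
end

section
/- For all integers n ≥ 1 and m ≥ 0, the following identity holds in ℤ[[q]]: Σ_{j=0}^{m-1} q^{nj} (q)_{n-1}^{-1} (q)_j^{-1} + q^{nm} (q)_n^{-1} (q)_m^{-1} = Σ_{j=0}^{m} q^{(n+1)j} (q)_n^{-1} (q)_j^{-1}. -/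
open PowerSeries

/-- `(q)_n = ∏_{i=1}^{n} (1 - q^i)` in `ℤ[[q]]`. -/
noncomputable def qPoch (n : ℕ) : PowerSeries ℤ :=
  ∏ i ∈ Finset.range n, (1 - (PowerSeries.X : PowerSeries ℤ) ^ (i + 1))

theorem qPoch_isUnit (n : ℕ) : IsUnit (qPoch n) := by
  rw [PowerSeries.isUnit_iff_constantCoeff]
  simp [qPoch, map_prod]

theorem inverse_qPoch_succ (n : ℕ) : Ring.inverse (qPoch n) =
    (1 - (PowerSeries.X : PowerSeries ℤ) ^ (n + 1)) * Ring.inverse (qPoch (n + 1)) := by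
  have h1 := Ring.inverse_mul_cancel _ (qPoch_isUnit n)
  have h2 := Ring.mul_inverse_cancel _ (qPoch_isUnit (n + 1))
  have h3 : qPoch (n + 1) = qPoch n * (1 - (PowerSeries.X : PowerSeries ℤ) ^ (n + 1)) := by
    simp [qPoch, Finset.prod_range_succ]
  generalize Ring.inverse (qPoch (n + 1)) = b at *
  rw [h3] at h2
  linear_combination (-(Ring.inverse (qPoch n))) * h2 +
    (1 - (PowerSeries.X : PowerSeries ℤ) ^ (n + 1)) * b * h1

/-- For all `n ≥ 1` and `m ≥ 0`, in `ℤ[[q]]`: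
`Σ_{j=0}^{m-1} q^{nj} (q)_{n-1}⁻¹ (q)_j⁻¹ + q^{nm} (q)_n⁻¹ (q)_m⁻¹
  = Σ_{j=0}^{m} q^{(n+1)j} (q)_n⁻¹ (q)_j⁻¹`. -/
theorem rectangle_complement_identity (n m : ℕ) (hn : 1 ≤ n) :
    (∑ j ∈ Finset.range m,
      (PowerSeries.X : PowerSeries ℤ) ^ (n * j) *
        Ring.inverse (qPoch (n - 1)) * Ring.inverse (qPoch j)) +
      (PowerSeries.X : PowerSeries ℤ) ^ (n * m) *
        Ring.inverse (qPoch n) * Ring.inverse (qPoch m) =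
    ∑ j ∈ Finset.range (m + 1),
      (PowerSeries.X : PowerSeries ℤ) ^ ((n + 1) * j) *
        Ring.inverse (qPoch n) * Ring.inverse (qPoch j) := by
  obtain ⟨k, rfl⟩ : ∃ k, n = k + 1 := ⟨n - 1, by omega⟩
  rw [Nat.add_sub_cancel]
  induction m with
  | zero => simp
  | succ m ih =>
    rw [Finset.sum_range_succ _ (m + 1), ← ih, Finset.sum_range_succ, inverse_qPoch_succ k,
      inverse_qPoch_succ m]
    ring
end

section
/- Let l ≥ θ ≥ 0 be integers. For every c ∈ ℤ and E ∈ ℤ, the set of infinite Fibonacci configurations a ∈ Fib_∞^{(θ,l)} with charge c and energy E is finite, and its cardinality equals p(E - θc - (l+1)c(c-1)/2), the number of partitions of the integer E - θc - (l+1)c(c-1)/2 (which is zero when this integer is negative). -/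
/-- An infinite Fibonacci configuration of type `(θ, l)` (for `l ≥ θ ≥ 0`): a
function `a : ℤ → {0,1}` (encoded as `ℤ → Bool`) such that
(1) any window of `l+1` consecutive integers carries at most one `1`;
(2) `a i = 0` for all sufficiently large `i`;
(3) for all sufficiently negative `i`, `a i = 1` iff `i ≡ θ (mod l+1)`. -/
def IsFibConfig (θ l : ℕ) (a : ℤ → Bool) : Prop :=
  (∀ i j : ℤ, i < j → j ≤ i + l → ¬(a i = true ∧ a j = true)) ∧
  (∃ M : ℤ, ∀ i : ℤ, M ≤ i → a i = false) ∧
  (∃ M : ℤ, ∀ i : ℤ, i ≤ M → (a i = true ↔ ((l : ℤ) + 1) ∣ (i - (θ : ℤ))))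

/-- The vacuum configuration `Vac_{(θ,l)}`: it takes the value `1` exactly at the
integers `θ - (l+1)k` for integers `k ≥ 1`, i.e. at integers `i ≤ θ - (l+1)` with
`i ≡ θ (mod l+1)`. -/
def vacConfig (θ l : ℕ) (i : ℤ) : Bool :=
  decide (i ≤ (θ : ℤ) - ((l : ℤ) + 1) ∧ ((l : ℤ) + 1) ∣ (i - (θ : ℤ)))

/-- The pointwise difference `b = a - Vac_{(θ,l)} : ℤ → {-1,0,1}`. -/
def diffVac (θ l : ℕ) (a : ℤ → Bool) (i : ℤ) : ℤ :=
  (if a i = true then 1 else 0) - (if vacConfig θ l i = true then 1 else 0)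

/-- The charge `Σ_{i∈ℤ} b_i` of a configuration `a`, where `b = a - Vac_{(θ,l)}`
(a finitely supported function, so the sum is finite). -/
noncomputable def charge (θ l : ℕ) (a : ℤ → Bool) : ℤ :=
  ∑ᶠ i : ℤ, diffVac θ l a i

/-- The energy `Σ_{i∈ℤ} i·b_i` of a configuration `a`, where `b = a - Vac_{(θ,l)}`. -/
noncomputable def energy (θ l : ℕ) (a : ℤ → Bool) : ℤ :=
  ∑ᶠ i : ℤ, i * diffVac θ l a i

/-- Position of the `k`-th one. -/
def fpos (θ l : ℕ) (c : ℤ) (f : ℕ → ℕ) (k : ℕ) : ℤ :=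
  (θ : ℤ) + ((l : ℤ) + 1) * (c - 1 - k) + f k

open Classical in
/-- The configuration attached to a charge and a decreasing sequence. -/
noncomputable def fconf (θ l : ℕ) (c : ℤ) (f : ℕ → ℕ) (i : ℤ) : Bool :=
  decide (∃ k, fpos θ l c f k = i)

theorem fpos_gap (θ l : ℕ) (c : ℤ) (f : ℕ → ℕ) (hf : Antitone f) {j k : ℕ} (h : j < k) :
    fpos θ l c f k + l + 1 ≤ fpos θ l c f j := by
  have h1 : (f k : ℤ) ≤ f j := by exact_mod_cast hf h.le
  have h2 : (j : ℤ) + 1 ≤ k := by exact_mod_cast h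
  unfold fpos
  nlinarith

theorem fpos_anti (θ l : ℕ) (c : ℤ) (f : ℕ → ℕ) (hf : Antitone f) :
    StrictAnti (fpos θ l c f) := by
  intro j k h
  have := fpos_gap θ l c f hf h
  omega

theorem fconf_inj (θ l : ℕ) (c : ℤ) (f g : ℕ → ℕ) (hf : Antitone f) (hg : Antitone g)
    (h : fconf θ l c f = fconf θ l c g) : f = g := by
  have hr : Set.range (fun k => - fpos θ l c f k) = Set.range (fun k => - fpos θ l c g k) := by
    ext i
    have := congrFun h (-i)
    simp only [fconf, decide_eq_decide] at this
    simp only [Set.mem_range]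
    constructor
    · rintro ⟨k, hk⟩
      obtain ⟨m, hm⟩ := this.1 ⟨k, by omega⟩
      exact ⟨m, by omega⟩
    · rintro ⟨k, hk⟩
      obtain ⟨m, hm⟩ := this.2 ⟨k, by omega⟩
      exact ⟨m, by omega⟩
  have h1 : StrictMono (fun k => - fpos θ l c f k) :=
    fun a b hab => neg_lt_neg (fpos_anti θ l c f hf hab)
  have h2 : StrictMono (fun k => - fpos θ l c g k) :=
    fun a b hab => neg_lt_neg (fpos_anti θ l c g hg hab)
  have h3 := (StrictMono.range_inj h1 h2).1 hr
  funext k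
  have := congrFun h3 k
  simp only [fpos] at this
  omega

theorem fconf_isFib (θ l : ℕ) (c : ℤ) (f : ℕ → ℕ) (hf : Antitone f) (K : ℕ)
    (hK : ∀ k, K ≤ k → f k = 0) : IsFibConfig θ l (fconf θ l c f) := by
  refine ⟨?_, ⟨fpos θ l c f 0 + 1, ?_⟩, ⟨fpos θ l c f K, ?_⟩⟩
  · rintro i j hij hj ⟨h1, h2⟩
    simp only [fconf, decide_eq_true_eq] at h1 h2
    obtain ⟨k, rfl⟩ := h1
    obtain ⟨m, rfl⟩ := h2
    rcases lt_trichotomy k m with h | h | h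
    · have := fpos_gap θ l c f hf h
      omega
    · subst h
      omega
    · have := fpos_gap θ l c f hf h
      omega
  · intro i hi
    simp only [fconf, decide_eq_false_iff_not]
    rintro ⟨k, rfl⟩
    have := (fpos_anti θ l c f hf).antitone (Nat.zero_le k)
    omega
  · intro i hi
    simp only [fconf, decide_eq_true_eq]
    constructor
    · rintro ⟨k, rfl⟩
      have hk : K ≤ k := (fpos_anti θ l c f hf).le_iff_ge.1 hi
      simp only [fpos, hK k hk]
      exact ⟨c - 1 - k, by push_cast; ring⟩
    · rintro ⟨t, ht⟩
      simp only [fpos, hK K le_rfl] at hi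
      have h1 : t ≤ c - 1 - K := by
        by_contra hcon
        have : c - 1 - K + 1 ≤ t := by omega
        push_cast at hi
        nlinarith
      refine ⟨(c - 1 - t).toNat, ?_⟩
      have h2 : (((c - 1 - t).toNat : ℕ) : ℤ) = c - 1 - t := by omega
      simp only [fpos, hK _ (show K ≤ (c - 1 - t).toNat by omega), h2]
      push_cast
      linarith

open Classical in
theorem ind_split (s : ℕ → ℤ) (hs : Function.Injective s) (K : ℕ) (i : ℤ) :
    (if ∃ k, s k = i then (1 : ℤ) else 0) =
      (∑ k ∈ Finset.range K, if i = s k then (1 : ℤ) else 0) +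
        if ∃ j, s (K + j) = i then (1 : ℤ) else 0 := by
  induction K with
  | zero => simp
  | succ K ih =>
    rw [ih, Finset.sum_range_succ, add_assoc]
    congr 1
    by_cases h : i = s K
    · subst h
      rw [if_pos ⟨0, rfl⟩, if_pos rfl, if_neg]
      · rfl
      · rintro ⟨j, hj⟩
        have := hs hj
        omega
    · rw [if_neg h, zero_add]
      congr 1
      apply propext
      constructor
      · rintro ⟨j, hj⟩
        rcases j with _ | j
        · exact absurd hj.symm h
        · exact ⟨j, by rw [← hj]; congr 1; omega⟩
      · rintro ⟨j, hj⟩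
        exact ⟨j + 1, by rw [← hj]; congr 1; omega⟩

theorem vac_eq (θ l : ℕ) (i : ℤ) :
    vacConfig θ l i = true ↔ ∃ k, fpos θ l 0 (fun _ => 0) k = i := by
  simp only [vacConfig, decide_eq_true_eq, fpos]
  constructor
  · rintro ⟨h, t, ht⟩
    have : t ≤ -1 := by
      by_contra hc
      have : 0 ≤ t := by omega
      nlinarith
    refine ⟨(-1 - t).toNat, ?_⟩
    have h2 : (((-1 - t).toNat : ℕ) : ℤ) = -1 - t := by omega
    rw [h2]
    push_cast
    linarith
  · rintro ⟨k, rfl⟩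
    refine ⟨?_, -1 - k, ?_⟩
    · push_cast
      nlinarith [Int.natCast_nonneg k, Int.natCast_nonneg l]
    · push_cast
      ring

theorem finsum_ind (g : ℤ → ℤ) (s : ℕ → ℤ) (K : ℕ) :
    (Function.support fun i => ∑ k ∈ Finset.range K, g i * (if i = s k then (1 : ℤ) else 0)).Finite ∧
    ∑ᶠ i : ℤ, ∑ k ∈ Finset.range K, g i * (if i = s k then (1 : ℤ) else 0) =
      ∑ k ∈ Finset.range K, g (s k) := by
  have hfin : ∀ k, (Function.support fun i => g i * (if i = s k then (1 : ℤ) else 0)).Finite := by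
    intro k
    apply (Set.finite_singleton (s k)).subset
    intro i hi
    by_contra hc
    apply hi
    simp at hc
    simp [hc]
  constructor
  · apply ((Finset.range K).image s).finite_toSet.subset
    intro i hi
    obtain ⟨k, hk, hne⟩ := Finset.exists_ne_zero_of_sum_ne_zero hi
    simp only [Finset.coe_image, Set.mem_image]
    refine ⟨k, hk, ?_⟩
    by_contra hc
    apply hne
    rw [if_neg (fun h => hc h.symm), mul_zero]
  · rw [finsum_sum_comm _ _ (fun k _ => hfin k)]
    apply Finset.sum_congr rfl
    intro k _
    rw [finsum_eq_single _ (s k)]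
    · simp
    · intro i hi
      simp [hi]

theorem finsum_diff (θ l : ℕ) (c : ℤ) (f : ℕ → ℕ) (hf : Antitone f) (K N : ℕ)
    (hK : ∀ k, K ≤ k → f k = 0) (hN : (N : ℤ) = K - c) (g : ℤ → ℤ) :
    ∑ᶠ i : ℤ, g i * diffVac θ l (fconf θ l c f) i =
      ∑ k ∈ Finset.range K, g (fpos θ l c f k) -
      ∑ k ∈ Finset.range N, g (fpos θ l 0 (fun _ => 0) k) := by
  classical
  rw [← (finsum_ind g (fpos θ l c f) K).2, ← (finsum_ind g (fpos θ l 0 (fun _ => 0)) N).2,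
    ← finsum_sub_distrib (finsum_ind g _ K).1 (finsum_ind g _ N).1]
  congr 1
  funext i
  rw [← Finset.mul_sum, ← Finset.mul_sum, ← mul_sub]
  congr 1
  have h1 := ind_split _ (fpos_anti θ l c f hf).injective K i
  have h2 := ind_split _ (fpos_anti θ l 0 (fun _ => 0) (fun _ _ _ => le_rfl)).injective N i
  have h3 : (∃ j, fpos θ l c f (K + j) = i) ↔ ∃ j, fpos θ l 0 (fun _ => 0) (N + j) = i := by
    apply exists_congr
    intro j
    simp only [fpos, hK (K + j) (by omega)]
    push_cast
    rw [hN]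
    ring_nf
  simp only [diffVac, vac_eq, fconf, decide_eq_true_eq]
  rw [h1, h2]
  simp only [h3]
  ring

theorem fconf_charge (θ l : ℕ) (c : ℤ) (f : ℕ → ℕ) (hf : Antitone f) (K : ℕ)
    (hK : ∀ k, K ≤ k → f k = 0) : charge θ l (fconf θ l c f) = c := by
  have h := finsum_diff θ l c f hf (K + c.toNat) (K + c.toNat - c).toNat
    (fun k hk => hK k (by omega)) (by omega) (fun _ => 1)
  simp only [one_mul] at h
  rw [charge, h]
  simp
  omega

theorem sum_fpos (θ l : ℕ) (c : ℤ) (f : ℕ → ℕ) (K : ℕ) :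
    2 * ∑ k ∈ Finset.range K, fpos θ l c f k =
      2 * K * θ + ((l : ℤ) + 1) * (2 * K * (c - 1) - K * (K - 1)) +
        2 * ∑ k ∈ Finset.range K, (f k : ℤ) := by
  induction K with
  | zero => simp
  | succ K ih =>
    rw [Finset.sum_range_succ, Finset.sum_range_succ, mul_add, ih, fpos]
    push_cast
    ring

theorem fconf_energy (θ l : ℕ) (c : ℤ) (f : ℕ → ℕ) (hf : Antitone f) (K : ℕ)
    (hK : ∀ k, K ≤ k → f k = 0) : energy θ l (fconf θ l c f) =
      θ * c + ((l : ℤ) + 1) * (c * (c - 1) / 2) + (∑ k ∈ Finset.range K, f k : ℕ) := by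
  obtain ⟨L, hL⟩ : ∃ L, L = K + c.toNat := ⟨_, rfl⟩
  obtain ⟨N, hN⟩ : ∃ N : ℕ, (N : ℤ) = L - c := ⟨(L - c).toNat, by omega⟩
  have h := finsum_diff θ l c f hf L N
    (fun k hk => hK k (by omega)) hN (fun i => i)
  rw [energy, h]
  have h1 := sum_fpos θ l c f L
  have h2 := sum_fpos θ l 0 (fun _ => 0) N
  have h3 : ∑ k ∈ Finset.range L, f k = ∑ k ∈ Finset.range K, f k := by
    symm
    apply Finset.sum_subset
    · intro k
      simp only [Finset.mem_range]
      omega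
    · intro k _ hk
      simp only [Finset.mem_range] at hk
      exact hK k (by omega)
  have h4 : 2 * (c * (c - 1) / 2) = c * (c - 1) :=
    Int.mul_ediv_cancel' (Int.even_mul_pred_self c).two_dvd
  rw [← h3]
  simp only [Nat.cast_zero, Finset.sum_const_zero] at h2
  rw [hN] at h2
  push_cast
  apply mul_left_cancel₀ (two_ne_zero (α := ℤ))
  rw [mul_sub, h1, h2]
  linear_combination (-(l : ℤ) - 1) * h4

theorem fib_exists (θ l : ℕ) (a : ℤ → Bool) (ha : IsFibConfig θ l a) :
    ∃ (c : ℤ) (f : ℕ → ℕ) (K : ℕ), Antitone f ∧ (∀ k, K ≤ k → f k = 0) ∧ a = fconf θ l c f := by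
  obtain ⟨hgap, ⟨B, hB⟩, M, hM⟩ := ha
  let P : ℕ → Prop := fun n => a (B - n) = true
  have hex : ∀ n : ℕ, ∃ m, n ≤ m ∧ P m := by
    intro n
    -- choose a very negative element
    obtain ⟨t, ht⟩ : ∃ t : ℕ, t = n + B.natAbs + M.natAbs + θ := ⟨_, rfl⟩
    have h1 : (t : ℤ) ≤ ((l : ℤ) + 1) * t := by
      nlinarith [Int.natCast_nonneg l, Int.natCast_nonneg t]
    refine ⟨(B - (θ - ((l : ℤ) + 1) * t)).toNat, by omega, ?_⟩
    have h2 : (((B - (θ - ((l : ℤ) + 1) * t)).toNat : ℕ) : ℤ) = B - (θ - ((l : ℤ) + 1) * t) := by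
      omega
    change a _ = true
    rw [h2, sub_sub_cancel, hM _ (by omega)]
    exact ⟨-t, by ring⟩
  have hinf : (setOf P).Infinite := by
    apply Set.infinite_of_not_bddAbove
    rintro ⟨u, hu⟩
    obtain ⟨m, hm, hPm⟩ := hex (u + 1)
    have := hu hPm
    omega
  let s : ℕ → ℤ := fun k => B - Nat.nth P k
  have hs_mem : ∀ k, a (s k) = true := fun k => Nat.nth_mem_of_infinite hinf k
  have hs_anti : StrictAnti s := by
    intro j k h
    have := Nat.nth_strictMono hinf h
    simp only [s]
    omega
  have hs_surj : ∀ i, a i = true → ∃ k, s k = i := by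
    intro i hi
    have h1 : i < B := by
      by_contra hc
      rw [hB i (by omega)] at hi
      simp at hi
    have h2 : P (B - i).toNat := by
      change a _ = true
      rw [← hi]
      congr 1
      omega
    have h3 : (B - i).toNat ∈ Set.range (Nat.nth P) := by
      rw [Nat.range_nth_of_infinite hinf]
      exact h2
    obtain ⟨k, hk⟩ := h3
    refine ⟨k, ?_⟩
    simp only [s]
    omega
  have hs_gap : ∀ k, s (k + 1) + l + 1 ≤ s k := by
    intro k
    by_contra hc
    exact hgap (s (k + 1)) (s k) (hs_anti (Nat.lt_succ_self k)) (by omega)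
      ⟨hs_mem _, hs_mem _⟩
  have hs_le : ∀ k : ℕ, s k ≤ B - k := by
    intro k
    have := (Nat.nth_strictMono hinf).le_apply (x := k)
    simp only [s]
    omega
  obtain ⟨K, hKdef⟩ : ∃ K : ℕ, K = (B - M).toNat := ⟨_, rfl⟩
  have hsM : ∀ k, K ≤ k → s k ≤ M := by
    intro k hk
    have := hs_le k
    omega
  have hstep : ∀ k, K ≤ k → s (k + 1) = s k - (l + 1) := by
    intro k hk
    have h1 : a (s k - (l + 1)) = true := by
      have h0 := hsM k hk
      rw [hM _ (by omega)]
      have h2 := (hM _ h0).1 (hs_mem k)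
      have h3 : s k - ((l : ℤ) + 1) - θ = (s k - θ) - (l + 1) := by ring
      rw [h3]
      exact dvd_sub h2 (dvd_refl _)
    obtain ⟨m, hm⟩ := hs_surj _ h1
    have h2 : k < m := hs_anti.lt_iff_gt.1 (by omega)
    have h3 : s m ≤ s (k + 1) := hs_anti.antitone h2
    have := hs_gap k
    omega
  obtain ⟨t, ht⟩ := (hM _ (hsM K le_rfl)).1 (hs_mem K)
  have htail : ∀ j : ℕ, s (K + j) = θ + (l + 1) * (t - j) := by
    intro j
    induction j with
    | zero =>
      simp only [Nat.add_zero, Nat.cast_zero, sub_zero]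
      omega
    | succ j ih =>
      rw [← Nat.add_assoc, hstep _ (by omega), ih]
      push_cast
      ring
  obtain ⟨c, hc⟩ : ∃ c : ℤ, c = t + K + 1 := ⟨_, rfl⟩
  let μ : ℕ → ℤ := fun k => s k - (θ + (l + 1) * (c - 1 - k))
  have hμ_anti : Antitone μ := by
    apply antitone_nat_of_succ_le
    intro k
    have := hs_gap k
    simp only [μ]
    push_cast
    nlinarith
  have hμ0 : ∀ k, K ≤ k → μ k = 0 := by
    intro k hk
    obtain ⟨j, rfl⟩ := Nat.exists_eq_add_of_le hk
    simp only [μ]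
    rw [htail, hc]
    push_cast
    ring
  have hμ_nn : ∀ k, 0 ≤ μ k := by
    intro k
    rw [← hμ0 (K + k) (by omega)]
    exact hμ_anti (by omega)
  refine ⟨c, fun k => (μ k).toNat, K, ?_, ?_, ?_⟩
  · intro j k h
    exact Int.toNat_le_toNat (hμ_anti h)
  · intro k hk
    simp [hμ0 k hk]
  · have hpos : ∀ k, fpos θ l c (fun k => (μ k).toNat) k = s k := by
      intro k
      simp only [fpos, Int.toNat_of_nonneg (hμ_nn k)]
      simp only [μ]
      ring
    funext i
    rw [Bool.eq_iff_iff]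
    simp only [fconf, decide_eq_true_eq, hpos]
    constructor
    · exact hs_surj i
    · rintro ⟨k, rfl⟩
      exact hs_mem k

/-- The decreasing sequence of a partition. -/
noncomputable def pseq {n : ℕ} (p : n.Partition) (k : ℕ) : ℕ :=
  (p.parts.sort (· ≥ ·)).getD k 0

theorem pseq_anti {n : ℕ} (p : n.Partition) : Antitone (pseq p) := by
  intro j k h
  have hs : (p.parts.sort (· ≥ ·)).Pairwise (· ≥ ·) := Multiset.pairwise_sort _ _
  unfold pseq
  by_cases hk : k < (p.parts.sort (· ≥ ·)).length
  · rw [List.getD_eq_getElem _ _ hk, List.getD_eq_getElem _ _ (lt_of_le_of_lt h hk)]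
    rcases h.eq_or_lt with rfl | h
    · exact le_rfl
    · exact List.pairwise_iff_getElem.1 hs _ _ _ _ h
  · rw [List.getD_eq_default _ _ (by omega)]
    exact Nat.zero_le _

theorem pseq_zero {n : ℕ} (p : n.Partition) (k : ℕ) (hk : (p.parts.sort (· ≥ ·)).length ≤ k) :
    pseq p k = 0 := List.getD_eq_default _ _ hk

theorem sum_getD (L : List ℕ) : ∑ k ∈ Finset.range L.length, L.getD k 0 = L.sum := by
  induction L with
  | nil => simp
  | cons x L ih =>
    rw [List.length_cons, Finset.sum_range_succ', List.sum_cons, ← ih]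
    simp [add_comm]

theorem pseq_sum {n : ℕ} (p : n.Partition) :
    ∑ k ∈ Finset.range (p.parts.sort (· ≥ ·)).length, pseq p k = n := by
  unfold pseq
  rw [sum_getD, ← Multiset.sum_coe, Multiset.sort_eq, p.parts_sum]

theorem getD_inj (L₁ : List ℕ) : ∀ (L₂ : List ℕ), (∀ x ∈ L₁, 0 < x) → (∀ x ∈ L₂, 0 < x) →
    (∀ k, L₁.getD k 0 = L₂.getD k 0) → L₁ = L₂ := by
  induction L₁ with
  | nil =>
    intro L₂ _ h2 h
    cases L₂ with
    | nil => rfl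
    | cons y L =>
      have h3 := h 0
      have h4 := h2 y (by simp)
      simp at h3
      omega
  | cons x L₁ ih =>
    intro L₂ h1 h2 h
    cases L₂ with
    | nil =>
      have h3 := h 0
      have h4 := h1 x (by simp)
      simp at h3
      omega
    | cons y L =>
      have h3 := h 0
      simp at h3
      rw [h3, ih L (fun z hz => h1 z (by simp [hz])) (fun z hz => h2 z (by simp [hz]))]
      intro k
      simpa using h (k + 1)

theorem pseq_inj {n : ℕ} (p q : n.Partition) (h : pseq p = pseq q) : p = q := by
  have := getD_inj (p.parts.sort (· ≥ ·)) (q.parts.sort (· ≥ ·))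
    (fun x hx => p.parts_pos (by simpa using hx)) (fun x hx => q.parts_pos (by simpa using hx))
    (fun k => congrFun h k)
  apply Nat.Partition.ext
  rw [← Multiset.sort_eq p.parts (· ≥ ·), this, Multiset.sort_eq]

theorem pseq_surj (f : ℕ → ℕ) (hf : Antitone f) (K : ℕ) (hK : ∀ k, K ≤ k → f k = 0) (n : ℕ)
    (hn : ∑ k ∈ Finset.range K, f k = n) : ∃ p : n.Partition, pseq p = f := by
  classical
  have hex : ∃ k, f k = 0 := ⟨K, hK K le_rfl⟩
  obtain ⟨m, hm⟩ : ∃ m, m = Nat.find hex := ⟨_, rfl⟩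
  have hm0 : ∀ k, m ≤ k → f k = 0 := by
    intro k hk
    have h1 := Nat.find_spec hex
    rw [← hm] at h1
    have := hf hk
    omega
  have hmpos : ∀ k, k < m → 0 < f k := by
    intro k hk
    rw [hm] at hk
    exact Nat.pos_of_ne_zero (Nat.find_min hex hk)
  have hmK : m ≤ K := by
    rw [hm]
    exact Nat.find_min' hex (hK K le_rfl)
  have hsum : ∑ k ∈ Finset.range m, f k = n := by
    rw [← hn]
    apply Finset.sum_subset
    · intro k
      simp only [Finset.mem_range]
      omega
    · intro k _ hk
      simp only [Finset.mem_range] at hk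
      exact hm0 k (by omega)
  obtain ⟨L, hL⟩ : ∃ L, L = (List.range m).map f := ⟨_, rfl⟩
  have hlen : L.length = m := by simp [hL]
  have hget : ∀ k, L.getD k 0 = f k := by
    intro k
    by_cases hk : k < m
    · rw [List.getD_eq_getElem _ _ (by omega)]
      simp [hL]
    · rw [List.getD_eq_default _ _ (by omega), hm0 k (by omega)]
  have hsorted : L.Pairwise (· ≥ ·) := by
    rw [List.pairwise_iff_getElem]
    intro i j hi hj hij
    simp only [hL, List.getElem_map, List.getElem_range]
    exact hf hij.le
  refine ⟨⟨(L : Multiset ℕ), ?_, ?_⟩, ?_⟩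
  · intro i hi
    simp only [hL, Multiset.mem_coe, List.mem_map, List.mem_range] at hi
    obtain ⟨k, hk, rfl⟩ := hi
    exact hmpos k hk
  · rw [Multiset.sum_coe, ← sum_getD, hlen, ← hsum]
    exact Finset.sum_congr rfl (fun k _ => hget k)
  · funext k
    have : (Multiset.sort (L : Multiset ℕ) (· ≥ ·)) = L := by
      apply List.Perm.eq_of_pairwise' (r := (· ≥ ·)) (Multiset.pairwise_sort _ _) hsorted
      rw [← Multiset.coe_eq_coe, Multiset.sort_eq]
    unfold pseq
    simp only [this]
    exact hget k


/-- For integers `l ≥ θ ≥ 0`, `c ∈ ℤ`, `E ∈ ℤ`: the set of infinite Fibonacci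
configurations of type `(θ,l)` with charge `c` and energy `E` is finite, and its
cardinality equals `p(E - θc - (l+1)c(c-1)/2)`, the number of partitions of the
integer `E - θc - (l+1)c(c-1)/2` (zero when this integer is negative). -/
theorem card_fibConfig_charge_energy (θ l : ℕ) (hθl : θ ≤ l) (c E : ℤ) :
    {a : ℤ → Bool | IsFibConfig θ l a ∧ charge θ l a = c ∧ energy θ l a = E}.Finite ∧
    {a : ℤ → Bool | IsFibConfig θ l a ∧ charge θ l a = c ∧ energy θ l a = E}.ncard =
      (if 0 ≤ E - (θ : ℤ) * c - ((l : ℤ) + 1) * (c * (c - 1) / 2)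
       then Fintype.card (Nat.Partition (E - (θ : ℤ) * c - ((l : ℤ) + 1) * (c * (c - 1) / 2)).toNat)
       else 0) := by
  split_ifs with h
  · obtain ⟨n, hn⟩ : ∃ n, n = (E - (θ : ℤ) * c - ((l : ℤ) + 1) * (c * (c - 1) / 2)).toNat :=
      ⟨_, rfl⟩
    rw [← hn]
    have hset : {a : ℤ → Bool | IsFibConfig θ l a ∧ charge θ l a = c ∧ energy θ l a = E} =
        Set.range (fun p : n.Partition => fconf θ l c (pseq p)) := by
      ext a
      simp only [Set.mem_setOf_eq, Set.mem_range]
      constructor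
      · rintro ⟨ha, hc, hE⟩
        obtain ⟨c', f, K, hf, hK, rfl⟩ := fib_exists θ l a ha
        rw [fconf_charge θ l c' f hf K hK] at hc
        subst hc
        rw [fconf_energy θ l c' f hf K hK] at hE
        obtain ⟨p, hp⟩ := pseq_surj f hf K hK n (by omega)
        exact ⟨p, by rw [hp]⟩
      · rintro ⟨p, rfl⟩
        refine ⟨fconf_isFib θ l c _ (pseq_anti p) _ (pseq_zero p),
          fconf_charge θ l c _ (pseq_anti p) _ (pseq_zero p), ?_⟩
        rw [fconf_energy θ l c _ (pseq_anti p) _ (pseq_zero p), pseq_sum]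
        omega
    rw [hset]
    refine ⟨Set.finite_range _, ?_⟩
    rw [← Set.image_univ, Set.ncard_image_of_injective, Set.ncard_univ, Nat.card_eq_fintype_card]
    intro p q hpq
    exact pseq_inj p q (fconf_inj θ l c _ _ (pseq_anti p) (pseq_anti q) hpq)
  · have hset : {a : ℤ → Bool | IsFibConfig θ l a ∧ charge θ l a = c ∧ energy θ l a = E} = ∅ := by
      rw [Set.eq_empty_iff_forall_notMem]
      rintro a ⟨ha, hc, hE⟩
      obtain ⟨c', f, K, hf, hK, rfl⟩ := fib_exists θ l a ha
      rw [fconf_charge θ l c' f hf K hK] at hc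
      subst hc
      rw [fconf_energy θ l c' f hf K hK] at hE
      omega
    rw [hset]
    simp
end
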